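/- Let M ∈ ℝ^{m×n} be entrywise nonnegative such that the vertices of conv(θ(M)) are non-repeated. Then the supremum ᾱ = sup{α ∈ [0,1] : rank₊(P^α(M)) = rank₊(M)} is attained, i.e., rank₊(P^{ᾱ}(M)) = rank₊(M). -/

import Mathlib

open Matrix BigOperators

/-- The column `j` of `M` normalized to unit ℓ₁-norm. -/
noncomputable def normCol {m n : ℕ} (M : Matrix (Fin m) (Fin n) ℝ) (j : Fin n) : Fin m → ℝ :=
  (∑ i, |M i j|)⁻¹ • fun i => M i j

/-- Column `j` of `M` is nonzero. -/
def colNZ {m n : ℕ} (M : Matrix (Fin m) (Fin n) ℝ) (j : Fin n) : Prop :=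
  (fun i => M i j) ≠ 0

/-- `θ(M)`: the set of ℓ₁-normalized nonzero columns of `M`. -/
noncomputable def thetaCols {m n : ℕ} (M : Matrix (Fin m) (Fin n) ℝ) : Set (Fin m → ℝ) :=
  {x | ∃ j, colNZ M j ∧ x = normCol M j}

/-- The nonnegative rank of `M`. -/
noncomputable def nnRank {m n : ℕ} (M : Matrix (Fin m) (Fin n) ℝ) : ℕ :=
  sInf {r : ℕ | ∃ U : Matrix (Fin m) (Fin r) ℝ, ∃ V : Matrix (Fin r) (Fin n) ℝ,
    (∀ i j, 0 ≤ U i j) ∧ (∀ i j, 0 ≤ V i j) ∧ M = U * V}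

/-- The squared Frobenius norm. -/
noncomputable def frobSq {m n : ℕ} (A : Matrix (Fin m) (Fin n) ℝ) : ℝ :=
  ∑ i, ∑ j, (A i j) ^ 2

/-- Feasibility for problem (tigrel): `B ≥ 0`, zero diagonal, `MB ≤ M` entrywise. -/
def TigrelFeasible {m n : ℕ} (M : Matrix (Fin m) (Fin n) ℝ)
    (B : Matrix (Fin n) (Fin n) ℝ) : Prop :=
  (∀ i j, 0 ≤ B i j) ∧ (∀ i, B i i = 0) ∧ ∀ i j, (M * B) i j ≤ M i j

/-- Optimality for problem (tigrel): feasible and minimizes `‖M - MB‖_F²`. -/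
def TigrelOpt {m n : ℕ} (M : Matrix (Fin m) (Fin n) ℝ)
    (B : Matrix (Fin n) (Fin n) ℝ) : Prop :=
  TigrelFeasible M B ∧
    ∀ B', TigrelFeasible M B' → frobSq (M - M * B) ≤ frobSq (M - M * B')

/-- A monomial matrix: permutation of a diagonal matrix with positive diagonal. -/
def IsMonomial {k : ℕ} (P : Matrix (Fin k) (Fin k) ℝ) : Prop :=
  ∃ (σ : Equiv.Perm (Fin k)) (d : Fin k → ℝ), (∀ i, 0 < d i) ∧
    ∀ i j, P i j = if i = σ j then d j else 0

/-- Every extreme point of `conv(θ(M))` equals `θ(M_{:j})` for exactly one column `j`. -/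
def NonRepeatedVertices {m n : ℕ} (M : Matrix (Fin m) (Fin n) ℝ) : Prop :=
  ∀ x ∈ Set.extremePoints ℝ (convexHull ℝ (thetaCols M)),
    ∃! j : Fin n, colNZ M j ∧ x = normCol M j

/-- Uniqueness of size-`r` exact NMF up to permutation and scaling. -/
def UniqueNMF {m n : ℕ} (r : ℕ) (M : Matrix (Fin m) (Fin n) ℝ) : Prop :=
  ∀ (U₁ U₂ : Matrix (Fin m) (Fin r) ℝ) (V₁ V₂ : Matrix (Fin r) (Fin n) ℝ),
    (∀ i j, 0 ≤ U₁ i j) → (∀ i j, 0 ≤ V₁ i j) →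
    (∀ i j, 0 ≤ U₂ i j) → (∀ i j, 0 ≤ V₂ i j) →
    M = U₁ * V₁ → M = U₂ * V₂ →
    ∃ P : Matrix (Fin r) (Fin r) ℝ, IsMonomial P ∧ U₂ = U₁ * P ∧ V₂ = P⁻¹ * V₁

/-- Separability of a factorization, expressed as a property of the right factor `V`. -/
def SeparableFactor {r n : ℕ} (V : Matrix (Fin r) (Fin n) ℝ) : Prop :=
  ∀ i : Fin r, ∃ j : Fin n, V i j ≠ 0 ∧ ∀ i' : Fin r, i' ≠ i → V i' j = 0

/-- The Frobenius norm. -/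
noncomputable def frobNorm {m n : ℕ} (A : Matrix (Fin m) (Fin n) ℝ) : ℝ :=
  Real.sqrt (∑ i, ∑ j, (A i j) ^ 2)

/-- The Euclidean (ℓ₂) norm of a vector. -/
noncomputable def vecNorm2 {n : ℕ} (x : Fin n → ℝ) : ℝ :=
  Real.sqrt (∑ i, (x i) ^ 2)

/-- The spectral (operator 2-) norm of a matrix. -/
noncomputable def specNorm {m n : ℕ} (A : Matrix (Fin m) (Fin n) ℝ) : ℝ :=
  sSup {c : ℝ | ∃ x : Fin n → ℝ, vecNorm2 x ≤ 1 ∧ c = vecNorm2 (A.mulVec x)}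

/-! For a feasible `B` put `P = M - M B`. Two facts give the theorem, because `α • B` is feasible
for every `α ∈ [0, 1]`.

*Matrices with a nonnegative factorization of inner size `r` form a closed set.* Rescaling the
columns of the left factor to sum to one bounds both factors in terms of the product, so locally
this set is the image of a compact set.

*`rank₊ M ≤ rank₊ P`.* By the first fact it is enough that `M` is a limit of matrices `P V` with
`V ≥ 0`. Otherwise a linear functional `g` would be nonnegative on the columns of `P` and negative
on some column of `M`. Its minimum `c < 0` over `conv θ(M)` is attained at a vertex, the
normalization of a column `j`, and `x ↦ g x - c ∑ᵢ xᵢ` is nonnegative on the columns of `M` and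
zero on the `j`-th. Hence `g` of column `j` of `P` is at most `c` times the sum of that column. The
sum is positive, since otherwise column `j` of `M` would be a nonnegative combination of the other
columns, which an unrepeated vertex forbids; so `g` is negative on a column of `P`. -/

section NonnegProducts

variable {m k n : Type*}

/-- The `m × n` real matrices admitting an exact nonnegative factorization whose inner dimension
is indexed by `k`; `nnRank A` is the least `r` such that `A` admits one with `k = Fin r`. -/
def nonnegProducts (m k n : Type*) [Fintype k] : Set (Matrix m n ℝ) :=
  {A | ∃ U : Matrix m k ℝ, ∃ V : Matrix k n ℝ,
    (∀ i j, 0 ≤ U i j) ∧ (∀ i j, 0 ≤ V i j) ∧ A = U * V}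

lemma mul_apply_nonneg {R : Type*} [Semiring R] [PartialOrder R] [IsOrderedRing R] [Fintype k]
    {A : Matrix m k R} {B : Matrix k n R} (hA : ∀ i j, 0 ≤ A i j) (hB : ∀ i j, 0 ≤ B i j)
    (i : m) (j : n) : 0 ≤ (A * B) i j :=
  Finset.sum_nonneg fun l _ => mul_nonneg (hA i l) (hB l j)

lemma mul_mem_nonnegProducts {l : Type*} [Fintype k] [Fintype l] {A : Matrix m l ℝ}
    {W : Matrix l n ℝ} (hA : A ∈ nonnegProducts m k l) (hW : ∀ i j, 0 ≤ W i j) :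
    A * W ∈ nonnegProducts m k n := by
  obtain ⟨U, V, hU, hV, rfl⟩ := hA
  exact ⟨U, V * W, hU, mul_apply_nonneg hV hW, Matrix.mul_assoc U V W⟩

lemma exists_mul_eq_with_bounded_factors [Fintype m] [Fintype k] {U : Matrix m k ℝ}
    {V : Matrix k n ℝ} (hU : ∀ i j, 0 ≤ U i j) (hV : ∀ i j, 0 ≤ V i j) :
    ∃ U' : Matrix m k ℝ, ∃ V' : Matrix k n ℝ, (∀ i l, U' i l ∈ Set.Icc 0 1) ∧
      (∀ l j, V' l j ∈ Set.Icc 0 (∑ i, (U * V) i j)) ∧ U' * V' = U * V := by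
  have hs (l : k) : 0 ≤ ∑ i, U i l := Finset.sum_nonneg fun i _ => hU i l
  have hUs (i : m) (l : k) : U i l ≤ ∑ i, U i l :=
    Finset.single_le_sum (fun i _ => hU i l) (Finset.mem_univ i)
  refine ⟨.of fun i l => U i l / ∑ i, U i l, .of fun l j => (∑ i, U i l) * V l j,
    fun i l => ⟨div_nonneg (hU i l) (hs l), div_le_one_of_le₀ (hUs i l) (hs l)⟩,
    fun l j => ⟨mul_nonneg (hs l) (hV l j), ?_⟩, ?_⟩
  · rw [Matrix.of_apply, Finset.sum_mul]
    exact Finset.sum_le_sum fun i _ => Finset.single_le_sum (f := fun l => U i l * V l j)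
      (fun l _ => mul_nonneg (hU i l) (hV l j)) (Finset.mem_univ l)
  · ext i j
    simp only [Matrix.mul_apply, Matrix.of_apply]
    refine Finset.sum_congr rfl fun l _ => ?_
    have hzero : ∑ i, U i l = 0 → U i l = 0 := fun h => le_antisymm (h ▸ hUs i l) (hU i l)
    rw [← mul_assoc, div_mul_cancel_of_imp hzero]

lemma isClosed_nonnegProducts [Finite m] [Fintype k] [Finite n] :
    IsClosed (nonnegProducts m k n) := by
  cases nonempty_fintype m
  cases nonempty_fintype n
  refine isClosed_of_closure_subset fun A hA => ?_
  set C : ℝ := (∑ j, ∑ i, |A i j|) + 1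
  set W : Set (Matrix m n ℝ) := {A' | ∑ j, ∑ i, |A' i j| < C}
  set K : Set (Matrix m n ℝ) := (fun p : Matrix m k ℝ × Matrix k n ℝ => p.1 * p.2) ''
    ((Set.Icc 0 1).matrix ×ˢ (Set.Icc 0 C).matrix)
  have hAW : A ∈ W := lt_add_one (∑ j, ∑ i, |A i j|)
  have hWopen : IsOpen W := isOpen_lt (by fun_prop) continuous_const
  have hKclosed : IsClosed K :=
    ((isCompact_Icc.matrix.prod isCompact_Icc.matrix).image (by fun_prop)).isClosed
  have hsub : W ∩ nonnegProducts m k n ⊆ K := by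
    rintro _ ⟨hlt, U, V, hU, hV, rfl⟩
    obtain ⟨U', V', hU', hV', hUV⟩ := exists_mul_eq_with_bounded_factors hU hV
    refine ⟨(U', V'), ⟨hU', fun l j => ⟨(hV' l j).1, (hV' l j).2.trans ?_⟩⟩, hUV⟩
    calc ∑ i, (U * V) i j ≤ ∑ i, |(U * V) i j| := Finset.sum_le_sum fun i _ => le_abs_self _
      _ ≤ ∑ j, ∑ i, |(U * V) i j| := Finset.single_le_sum
          (fun j _ => Finset.sum_nonneg fun i _ => abs_nonneg ((U * V) i j)) (Finset.mem_univ j)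
      _ ≤ C := hlt.le
  have hKsub : K ⊆ nonnegProducts m k n := by
    rintro _ ⟨⟨U, V⟩, ⟨hU, hV⟩, rfl⟩
    exact ⟨U, V, fun i l => (hU i l).1, fun l j => (hV l j).1, rfl⟩
  exact hKsub (closure_minimal hsub hKclosed (hWopen.inter_closure ⟨hAW, hA⟩))

end NonnegProducts

section NonnegRank

variable {m n : ℕ} {A : Matrix (Fin m) (Fin n) ℝ}

lemma nnRank_le_of_mem {r : ℕ} (h : A ∈ nonnegProducts (Fin m) (Fin r) (Fin n)) :
    nnRank A ≤ r :=
  Nat.sInf_le h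

lemma mem_nonnegProducts_nnRank (hA : ∀ i j, 0 ≤ A i j) :
    A ∈ nonnegProducts (Fin m) (Fin (nnRank A)) (Fin n) := by
  have hone (i j : Fin n) : (0 : ℝ) ≤ (1 : Matrix (Fin n) (Fin n) ℝ) i j := by
    rw [Matrix.one_apply]
    positivity
  exact Nat.sInf_mem (s := {r | A ∈ nonnegProducts (Fin m) (Fin r) (Fin n)})
    ⟨n, A, 1, hA, hone, (Matrix.mul_one A).symm⟩

end NonnegRank

section Farkas

lemma mem_closure_hull_of_forall_dual {E : Type*} [AddCommGroup E] [Module ℝ E]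
    [TopologicalSpace E] [IsTopologicalAddGroup E] [ContinuousSMul ℝ E] [LocallyConvexSpace ℝ E]
    {s : Set E} {x : E} (h : ∀ g : StrongDual ℝ E, (∀ y ∈ s, 0 ≤ g y) → 0 ≤ g x) :
    x ∈ closure (PointedCone.hull ℝ s : Set E) := by
  by_contra hx
  let C : ProperCone ℝ E := Submodule.closure (PointedCone.hull ℝ s)
  obtain ⟨g, hg, hgx⟩ := C.hyperplane_separation_point hx
  exact hgx.not_ge (h g fun y hy => hg y (subset_closure (PointedCone.subset_hull hy)))

lemma exists_mulVec_eq_of_mem_hull_range_col {m k : Type*} [Fintype k] {P : Matrix m k ℝ}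
    {x : m → ℝ} (hx : x ∈ PointedCone.hull ℝ (Set.range P.col)) :
    ∃ v : k → ℝ, (∀ l, 0 ≤ v l) ∧ P *ᵥ v = x := by
  obtain ⟨c, rfl⟩ := (Submodule.mem_span_range_iff_exists_fun _).1 hx
  refine ⟨fun l => c l, fun l => (c l).2, ?_⟩
  ext i
  simp only [Matrix.mulVec, dotProduct, Finset.sum_apply, Pi.smul_apply, Matrix.col_apply]
  exact Finset.sum_congr rfl fun l _ => mul_comm _ _

lemma mem_closure_mul_nonneg_of_forall_dual {m k n : Type*} [Fintype k] {P : Matrix m k ℝ}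
    {M : Matrix m n ℝ}
    (h : ∀ g : StrongDual ℝ (m → ℝ), (∀ l, 0 ≤ g (P.col l)) → ∀ j, 0 ≤ g (M.col j)) :
    M ∈ closure {A | ∃ V : Matrix k n ℝ, (∀ l j, 0 ≤ V l j) ∧ A = P * V} := by
  have hcol : M.col ∈ closure (Set.univ.pi fun _ : n =>
      (PointedCone.hull ℝ (Set.range P.col) : Set (m → ℝ))) := by
    rw [closure_pi_set]
    exact fun j _ => mem_closure_hull_of_forall_dual fun g hg =>
      h g (fun l => hg _ (Set.mem_range_self l)) j
  refine map_mem_closure (f := Matrix.transpose) continuous_id.matrix_transpose hcol fun Q hQ => ?_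
  choose v hv hvQ using fun j => exists_mulVec_eq_of_mem_hull_range_col (hQ j (Set.mem_univ j))
  refine ⟨Matrix.of fun l j => v j l, fun l j => hv j l, ?_⟩
  ext i j
  exact (congrFun (hvQ j) i).symm

end Farkas

section ExtremePoints

variable {E : Type*} [AddCommGroup E] {K : Set E}

lemma exists_eq_of_sum_smul_mem_extremePoints {𝕜 ι : Type*} [Field 𝕜] [LinearOrder 𝕜]
    [IsStrictOrderedRing 𝕜] [Module 𝕜 E] [Fintype ι] (hK : Convex 𝕜 K) {w : ι → 𝕜} {z : ι → E}
    (hw : ∀ i, 0 ≤ w i) (hw1 : ∑ i, w i = 1) (hz : ∀ i, w i ≠ 0 → z i ∈ K)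
    (hx : ∑ i, w i • z i ∈ K.extremePoints 𝕜) :
    ∃ i, w i ≠ 0 ∧ z i = ∑ i, w i • z i := by
  by_contra! hne
  have hconv := (hK.mem_extremePoints_iff_convex_sdiff.1 hx).2
  have hmem := hconv.finsum_mem hw (by rwa [finsum_eq_sum_of_fintype])
    fun i hi => ⟨hz i hi, hne i hi⟩
  rw [finsum_eq_sum_of_fintype] at hmem
  exact hmem.2 rfl

lemma exists_mem_extremePoints_isMinOn [Module ℝ E] [TopologicalSpace E] [T2Space E]
    [IsTopologicalAddGroup E] [ContinuousSMul ℝ E] [LocallyConvexSpace ℝ E] (hK : IsCompact K)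
    (hne : K.Nonempty) (g : StrongDual ℝ E) : ∃ x ∈ K.extremePoints ℝ, IsMinOn g K x := by
  obtain ⟨z, hzK, hz⟩ := hK.exists_isMinOn hne g.continuous.continuousOn
  have hF : IsExposed ℝ K {x ∈ K | ∀ y ∈ K, (-g) y ≤ (-g) x} := fun _ => ⟨-g, rfl⟩
  obtain ⟨x, hx⟩ := (hF.isCompact hK).extremePoints_nonempty
    ⟨z, hzK, fun y hy => neg_le_neg (hz hy)⟩
  exact ⟨x, hF.isExtreme.extremePoints_subset_extremePoints hx,
    fun y hy => neg_le_neg_iff.1 (hx.1.2 y hy)⟩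

end ExtremePoints

section NormalizedColumns

variable {m n : ℕ} {M : Matrix (Fin m) (Fin n) ℝ}

lemma colNZ_iff_sum_pos {j : Fin n} (hM : ∀ i, 0 ≤ M i j) : colNZ M j ↔ 0 < ∑ i, M i j := by
  rw [(Finset.sum_nonneg fun i _ => hM i).lt_iff_ne', colNZ, Ne, funext_iff, Ne,
    Finset.sum_eq_zero_iff_of_nonneg fun i _ => hM i]
  simp

lemma sum_smul_normCol {j : Fin n} (hM : ∀ i, 0 ≤ M i j) :
    (∑ i, M i j) • normCol M j = M.col j := by
  simp only [normCol, abs_of_nonneg (hM _)]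
  by_cases hj : colNZ M j
  · exact smul_inv_smul₀ ((colNZ_iff_sum_pos hM).1 hj).ne' _
  · rw [not_not.1 hj, smul_zero, smul_zero]
    exact (not_not.1 hj).symm

lemma normCol_mem_convexHull {j : Fin n} (hj : colNZ M j) :
    normCol M j ∈ convexHull ℝ (thetaCols M) :=
  subset_convexHull ℝ _ ⟨j, hj, rfl⟩

lemma isCompact_convexHull_thetaCols : IsCompact (convexHull ℝ (thetaCols M)) := by
  refine Set.Finite.isCompact_convexHull ℝ ((Set.finite_range (normCol M)).subset ?_)
  rintro x ⟨j, -, rfl⟩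
  exact Set.mem_range_self j

lemma exists_vertex_forall_le (hM : ∀ i j, 0 ≤ M i j) (g : StrongDual ℝ (Fin m → ℝ))
    {k : Fin n} (hk : g (M.col k) < 0) :
    ∃ j, colNZ M j ∧ normCol M j ∈ (convexHull ℝ (thetaCols M)).extremePoints ℝ ∧
      g (normCol M j) < 0 ∧ ∀ l, g (normCol M j) * ∑ i, M i l ≤ g (M.col l) := by
  have hsum (l : Fin n) : 0 ≤ ∑ i, M i l := Finset.sum_nonneg fun i _ => hM i l
  have hkNZ : colNZ M k := fun h => hk.ne ((congrArg g h).trans (map_zero g))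
  obtain ⟨x, hx, hmin⟩ := exists_mem_extremePoints_isMinOn isCompact_convexHull_thetaCols
    ⟨_, normCol_mem_convexHull hkNZ⟩ g
  obtain ⟨j, hj, rfl⟩ := extremePoints_convexHull_subset hx
  have hle (l : Fin n) : g (normCol M j) * ∑ i, M i l ≤ g (M.col l) := by
    rw [← sum_smul_normCol fun i => hM i l, map_smul, smul_eq_mul, mul_comm]
    by_cases hl : colNZ M l
    · exact mul_le_mul_of_nonneg_left (hmin (normCol_mem_convexHull hl)) (hsum l)
    · rw [← (hsum l).eq_of_not_lt (mt (colNZ_iff_sum_pos fun i => hM i l).2 hl)]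
      simp
  exact ⟨j, hj, hx, neg_of_mul_neg_left ((hle k).trans_lt hk) (hsum k), hle⟩

lemma exists_normCol_eq_of_col_eq_sum (hM : ∀ i j, 0 ≤ M i j) {j : Fin n} (hj : colNZ M j)
    (hext : normCol M j ∈ (convexHull ℝ (thetaCols M)).extremePoints ℝ) {c : Fin n → ℝ}
    (hc : ∀ k, 0 ≤ c k) (hcol : M.col j = ∑ k, c k • M.col k) :
    ∃ k, c k ≠ 0 ∧ colNZ M k ∧ normCol M k = normCol M j := by
  set s : Fin n → ℝ := fun k => ∑ i, M i k with hs
  have hsj : 0 < s j := (colNZ_iff_sum_pos fun i => hM i j).1 hj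
  set w : Fin n → ℝ := fun k => (s j)⁻¹ * (c k * s k) with hw
  have hs0 (k : Fin n) : 0 ≤ s k := Finset.sum_nonneg fun i _ => hM i k
  have hw0 (k : Fin n) : 0 ≤ w k := mul_nonneg (inv_nonneg.2 hsj.le) (mul_nonneg (hc k) (hs0 k))
  have hw1 : ∑ k, w k = 1 := by
    have hsum : s j = ∑ k, c k * s k := by
      simpa [hs, Finset.mul_sum, Finset.sum_comm (γ := Fin n)] using
        congrArg (fun x : Fin m → ℝ => ∑ i, x i) hcol
    rw [hw, ← Finset.mul_sum, ← hsum, inv_mul_cancel₀ hsj.ne']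
  have hwsum : ∑ k, w k • normCol M k = normCol M j := by
    simp only [hw, mul_smul, ← Finset.smul_sum, hs, sum_smul_normCol fun i => hM i _, ← hcol]
    rw [← sum_smul_normCol fun i => hM i j, inv_smul_smul₀ hsj.ne']
  have hNZ (k : Fin n) (hk : w k ≠ 0) : colNZ M k :=
    (colNZ_iff_sum_pos fun i => hM i k).2
      ((hs0 k).lt_of_ne' (right_ne_zero_of_mul (right_ne_zero_of_mul hk)))
  obtain ⟨k, hk, hkj⟩ := exists_eq_of_sum_smul_mem_extremePoints (convex_convexHull ℝ _) hw0 hw1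
    (fun k hk => normCol_mem_convexHull (hNZ k hk)) (hwsum ▸ hext)
  exact ⟨k, left_ne_zero_of_mul (right_ne_zero_of_mul hk), hNZ k hk, hkj.trans hwsum⟩

end NormalizedColumns

section Tigrel

lemma col_mul_eq_sum {R m k n : Type*} [CommSemiring R] [Fintype k] (A : Matrix m k R)
    (B : Matrix k n R) (j : n) : (A * B).col j = ∑ l, B l j • A.col l := by
  ext i
  simp [Matrix.mul_apply, mul_comm]

variable {m n : ℕ} {M : Matrix (Fin m) (Fin n) ℝ} {B : Matrix (Fin n) (Fin n) ℝ}

lemma TigrelFeasible.smul (hM : ∀ i j, 0 ≤ M i j) (hB : TigrelFeasible M B) {α : ℝ}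
    (hα : α ∈ Set.Icc 0 1) : TigrelFeasible M (α • B) := by
  refine ⟨fun i j => mul_nonneg hα.1 (hB.1 i j), fun i => by simp [hB.2.1 i], fun i j => ?_⟩
  rw [Matrix.mul_smul]
  exact (mul_le_of_le_one_left (mul_apply_nonneg hM hB.1 i j) hα.2).trans (hB.2.2 i j)

lemma TigrelFeasible.sub_mul_nonneg (hB : TigrelFeasible M B) (i : Fin m) (j : Fin n) :
    0 ≤ (M - M * B) i j :=
  sub_nonneg.2 (hB.2.2 i j)

lemma TigrelFeasible.sum_sub_mul_pos (hM : ∀ i j, 0 ≤ M i j) (hvert : NonRepeatedVertices M)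
    (hB : TigrelFeasible M B) {j : Fin n} (hj : colNZ M j)
    (hext : normCol M j ∈ (convexHull ℝ (thetaCols M)).extremePoints ℝ) :
    0 < ∑ i, (M - M * B) i j := by
  refine (colNZ_iff_sum_pos fun i => hB.sub_mul_nonneg i j).1 fun hzero => ?_
  have hcol : M.col j = ∑ k, B k j • M.col k := by
    rw [← col_mul_eq_sum]
    exact sub_eq_zero.1 hzero
  obtain ⟨k, hBk, hk, hkj⟩ := exists_normCol_eq_of_col_eq_sum hM hj hext (fun k => hB.1 k j) hcol
  have hkeq : k = j := (hvert _ hext).unique ⟨hk, hkj.symm⟩ ⟨hj, rfl⟩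
  exact hBk (hkeq ▸ hB.2.1 j)

lemma TigrelFeasible.map_col_nonneg (hM : ∀ i j, 0 ≤ M i j) (hvert : NonRepeatedVertices M)
    (hB : TigrelFeasible M B) {g : StrongDual ℝ (Fin m → ℝ)}
    (hg : ∀ j, 0 ≤ g ((M - M * B).col j)) (k : Fin n) : 0 ≤ g (M.col k) := by
  by_contra! hk
  obtain ⟨j, hj, hext, hneg, hle⟩ := exists_vertex_forall_le hM g hk
  set c := g (normCol M j)
  have hgj : g (M.col j) = c * ∑ i, M i j := by
    rw [← sum_smul_normCol fun i => hM i j, map_smul, smul_eq_mul, mul_comm]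
  have hgMB : c * ∑ i, (M * B) i j ≤ g ((M * B).col j) :=
    calc c * ∑ i, (M * B) i j = ∑ l, B l j * (c * ∑ i, M i l) := by
          simp only [Matrix.mul_apply, Finset.mul_sum]
          rw [Finset.sum_comm]
          exact Finset.sum_congr rfl fun l _ => Finset.sum_congr rfl fun i _ => by ring
      _ ≤ ∑ l, B l j * g (M.col l) :=
          Finset.sum_le_sum fun l _ => mul_le_mul_of_nonneg_left (hle l) (hB.1 l j)
      _ = g ((M * B).col j) := by simp [col_mul_eq_sum]
  have hlt : g ((M - M * B).col j) < 0 :=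
    calc g ((M - M * B).col j) = g (M.col j) - g ((M * B).col j) := map_sub g _ _
      _ ≤ c * ∑ i, M i j - c * ∑ i, (M * B) i j := by rw [hgj]; gcongr
      _ = c * ∑ i, (M - M * B) i j := by
          simp only [Matrix.sub_apply, Finset.sum_sub_distrib, mul_sub]
      _ < 0 := mul_neg_of_neg_of_pos hneg (hB.sum_sub_mul_pos hM hvert hj hext)
  exact hlt.not_ge (hg j)

lemma TigrelFeasible.nnRank_le_nnRank_sub_mul (hM : ∀ i j, 0 ≤ M i j)
    (hvert : NonRepeatedVertices M) (hB : TigrelFeasible M B) :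
    nnRank M ≤ nnRank (M - M * B) := by
  refine nnRank_le_of_mem (closure_minimal ?_ isClosed_nonnegProducts
    (mem_closure_mul_nonneg_of_forall_dual fun g hg => hB.map_col_nonneg hM hvert hg))
  rintro _ ⟨V, hV, rfl⟩
  exact mul_mem_nonnegProducts (mem_nonnegProducts_nnRank hB.sub_mul_nonneg) hV

lemma TigrelFeasible.nnRank_sub_mul_eq_iff (hM : ∀ i j, 0 ≤ M i j)
    (hvert : NonRepeatedVertices M) (hB : TigrelFeasible M B) :
    nnRank (M - M * B) = nnRank M ↔
      M - M * B ∈ nonnegProducts (Fin m) (Fin (nnRank M)) (Fin n) :=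
  ⟨fun h => h ▸ mem_nonnegProducts_nnRank hB.sub_mul_nonneg,
    fun h => (nnRank_le_of_mem h).antisymm (hB.nnRank_le_nnRank_sub_mul hM hvert)⟩

end Tigrel

theorem stmt18_general {m n : ℕ} (M : Matrix (Fin m) (Fin n) ℝ) (hM : ∀ i j, 0 ≤ M i j)
    (hvert : NonRepeatedVertices M)
    (B : Matrix (Fin n) (Fin n) ℝ) (hB : TigrelFeasible M B) :
    nnRank (M * (1 - (sSup {α : ℝ | α ∈ Set.Icc (0 : ℝ) 1 ∧
        nnRank (M * (1 - α • B)) = nnRank M}) • B)) = nnRank M := by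
  simp only [Matrix.mul_sub, Matrix.mul_one]
  set S := {α : ℝ | α ∈ Set.Icc (0 : ℝ) 1 ∧ nnRank (M - M * (α • B)) = nnRank M}
  have hS : S = Set.Icc 0 1 ∩
      (fun α : ℝ => M - M * (α • B)) ⁻¹' nonnegProducts (Fin m) (Fin (nnRank M)) (Fin n) :=
    Set.ext fun α => and_congr_right fun hα =>
      (hB.smul hM hα).nnRank_sub_mul_eq_iff hM hvert
  have hclosed : IsClosed S :=
    hS ▸ isClosed_Icc.inter (isClosed_nonnegProducts.preimage (by fun_prop))
  have hne : S.Nonempty := ⟨0, ⟨le_rfl, zero_le_one⟩, by simp⟩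
  exact (hclosed.csSup_mem hne ⟨1, fun α hα => hα.1.2⟩).2

/-- the supremum `ᾱ = sup{α ∈ [0,1] : rank₊(P^α(M)) = rank₊(M)}` is
attained: `rank₊(P^ᾱ(M)) = rank₊(M)`. -/
theorem stmt18 {m n : ℕ} (M : Matrix (Fin m) (Fin n) ℝ) (hM : ∀ i j, 0 ≤ M i j)
    (hvert : NonRepeatedVertices M)
    (B : Matrix (Fin n) (Fin n) ℝ) (hB : TigrelOpt M B) :
    nnRank (M * (1 - (sSup {α : ℝ | α ∈ Set.Icc (0 : ℝ) 1 ∧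
        nnRank (M * (1 - α • B)) = nnRank M}) • B)) = nnRank M :=
  stmt18_general M hM hvert B hB.1
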